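/- arXiv:1210.0802 — 2 statements merged into one kernel-verified Lean document; each statement's English description precedes it below -/
import Mathlib

section
/- Let A, B : ℝ × ℝ × ℝ → ℝ, (t,q,v) ↦ A(t,q,v), B(t,q,v), be smooth. Then there exists a smooth Lagrangian L : ℝ × ℝ × ℝ → ℝ such that for every twice continuously differentiable curve q : ℝ → ℝ and every t, EL(L)[q](t) = A(t, q(t), q'(t))·q''(t) + B(t, q(t), q'(t)), if and only if the Helmholtz condition ∂B/∂v(t,q,v) = ∂A/∂t(t,q,v) + v·∂A/∂q(t,q,v) holds for all (t,q,v) ∈ ℝ³. -/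
/-- Partial derivative of `L (t,q,v)` with respect to `t`. -/
noncomputable def pt (L : ℝ → ℝ → ℝ → ℝ) : ℝ → ℝ → ℝ → ℝ :=
  fun t q v => deriv (fun s => L s q v) t

/-- Partial derivative of `L (t,q,v)` with respect to `q`. -/
noncomputable def pq (L : ℝ → ℝ → ℝ → ℝ) : ℝ → ℝ → ℝ → ℝ :=
  fun t q v => deriv (fun s => L t s v) q

/-- Partial derivative of `L (t,q,v)` with respect to `v`. -/
noncomputable def pv (L : ℝ → ℝ → ℝ → ℝ) : ℝ → ℝ → ℝ → ℝ :=
  fun t q v => deriv (fun s => L t q s) v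

/-- The Euler–Lagrange expression of the Lagrangian `L` along a curve `q`:
`EL(L)[q](t) = d/dt[∂L/∂v(t, q(t), q'(t))] − ∂L/∂q(t, q(t), q'(t))`. -/
noncomputable def EL (L : ℝ → ℝ → ℝ → ℝ) (q : ℝ → ℝ) (t : ℝ) : ℝ :=
  deriv (fun s => pv L s (q s) (deriv q s)) t - pq L t (q t) (deriv q t)


open MeasureTheory Set in
theorem par_contDiff {E : Type} [NormedAddCommGroup E] [NormedSpace ℝ E] [ProperSpace E] (n : ℕ) :
    ∀ {F : Type} [NormedAddCommGroup F] [NormedSpace ℝ F] [CompleteSpace F] (f : E × ℝ → F),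
      ContDiff ℝ n f → ContDiff ℝ n (fun x => ∫ s in (0:ℝ)..1, f (x, s)) := by
  induction n with
  | zero =>
    intro F _ _ _ f hf
    have hc : Continuous f := hf.continuous
    refine contDiff_zero.2 ?_
    exact intervalIntegral.continuous_parametric_intervalIntegral_of_continuous'
      (f := fun x s => f (x, s)) hc 0 1
  | succ n ih =>
    intro F _ _ _ f hf
    let g : E × ℝ → (E →L[ℝ] F) := fun p => (fderiv ℝ f p).comp (ContinuousLinearMap.inl ℝ E ℝ)
    have hg : ContDiff ℝ n g := by
      have h1 : ContDiff ℝ n (fderiv ℝ f) := hf.fderiv_right (by norm_cast)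
      exact h1.clm_comp contDiff_const
    have hgc : Continuous g := hg.continuous
    have hfc : Continuous f := hf.continuous
    have hfd : Differentiable ℝ f := hf.differentiable (by simp)
    push_cast
    rw [contDiff_succ_iff_hasFDerivAt]
    refine ⟨fun x => ∫ s in (0:ℝ)..1, g (x, s), ih g hg, fun x₀ => ?_⟩
    obtain ⟨C, hC⟩ := ((isCompact_closedBall x₀ 1).prod (isCompact_Icc (a := (0:ℝ)) (b := 1))).exists_bound_of_continuousOn
      hgc.continuousOn
    refine intervalIntegral.hasFDerivAt_integral_of_dominated_of_fderiv_le
      (F := fun x s => f (x, s)) (F' := fun x s => g (x, s)) (bound := fun _ => C)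
      (Metric.closedBall_mem_nhds x₀ one_pos) ?_ ?_ ?_ ?_ ?_ ?_
    · refine Filter.Eventually.of_forall fun x => ?_
      exact (hfc.comp (by fun_prop : Continuous fun s : ℝ => (x, s))).aestronglyMeasurable
    · exact (hfc.comp (by fun_prop : Continuous fun s : ℝ => (x₀, s))).intervalIntegrable _ _
    · exact (hgc.comp (by fun_prop : Continuous fun s : ℝ => (x₀, s))).aestronglyMeasurable
    · refine Filter.Eventually.of_forall fun s hs x hx => hC _ ⟨hx, ?_⟩
      rw [uIoc_of_le zero_le_one] at hs
      exact ⟨hs.1.le, hs.2⟩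
    · simp
    · refine Filter.Eventually.of_forall fun s hs x hx => ?_
      exact (hfd (x, s)).hasFDerivAt.comp x (hasFDerivAt_prodMk_left x s)

/-- directional derivative -/
noncomputable def Dd (w : ℝ × ℝ × ℝ) (F : ℝ × ℝ × ℝ → ℝ) : ℝ × ℝ × ℝ → ℝ :=
  fun p => fderiv ℝ F p w

/-- smooth functions -/
abbrev Sm (F : ℝ × ℝ × ℝ → ℝ) : Prop := ContDiff ℝ (⊤ : ℕ∞) F

theorem Sm.diff {F : ℝ × ℝ × ℝ → ℝ} (h : Sm F) : Differentiable ℝ F :=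
  ContDiff.differentiable h (by simp)

theorem Sm.Dd {F : ℝ × ℝ × ℝ → ℝ} (h : Sm F) (w : ℝ × ℝ × ℝ) : Sm (Dd w F) := by
  have h1 : ContDiff ℝ (⊤ : ℕ∞) (fderiv ℝ F) := ContDiff.fderiv_right h (by simp)
  exact h1.clm_apply contDiff_const

theorem Dd_symm {F : ℝ × ℝ × ℝ → ℝ} (h : Sm F) (u w : ℝ × ℝ × ℝ) (p : ℝ × ℝ × ℝ) :
    Dd u (Dd w F) p = Dd w (Dd u F) p := by
  have h1 : ContDiff ℝ (⊤ : ℕ∞) (fderiv ℝ F) := ContDiff.fderiv_right h (by simp)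
  have h2 : DifferentiableAt ℝ (fderiv ℝ F) p := h1.differentiable (by simp) p
  have key : ∀ a b : ℝ × ℝ × ℝ, Dd a (Dd b F) p = fderiv ℝ (fderiv ℝ F) p a b := by
    intro a b
    have := (h2.hasFDerivAt.clm_apply (hasFDerivAt_const b p)).fderiv
    unfold Dd
    rw [this]
    simp
  rw [key, key]
  have hs : IsSymmSndFDerivAt ℝ F p :=
    ContDiffAt.isSymmSndFDerivAt (n := (⊤ : ℕ∞)) (ContDiff.contDiffAt h)
      (by simp only [minSmoothness_of_isRCLikeNormedField]; exact WithTop.coe_le_coe.2 (le_top : (2 : ℕ∞) ≤ ⊤))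
  exact hs u w

theorem Dd_curve {F : ℝ × ℝ × ℝ → ℝ} (h : Sm F) {a b c : ℝ → ℝ} {a' b' c' s : ℝ}
    (ha : HasDerivAt a a' s) (hb : HasDerivAt b b' s) (hc : HasDerivAt c c' s) :
    HasDerivAt (fun s => F (a s, b s, c s))
      (a' * Dd (1, 0, 0) F (a s, b s, c s) + b' * Dd (0, 1, 0) F (a s, b s, c s)
        + c' * Dd (0, 0, 1) F (a s, b s, c s)) s := by
  have h1 := (h.diff (a s, b s, c s)).hasFDerivAt.comp_hasDerivAt s (ha.prodMk (hb.prodMk hc))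
  have : ((a', b', c') : ℝ × ℝ × ℝ) = a' • (1, 0, 0) + b' • (0, 1, 0) + c' • (0, 0, 1) := by
    simp
  rw [this, map_add, map_add, map_smul, map_smul, map_smul] at h1
  exact h1

theorem Dd_t {F : ℝ × ℝ × ℝ → ℝ} (h : Sm F) (t q v : ℝ) :
    HasDerivAt (fun s => F (s, q, v)) (Dd (1, 0, 0) F (t, q, v)) t := by
  simpa using Dd_curve h (hasDerivAt_id t) (hasDerivAt_const t q) (hasDerivAt_const t v)

theorem Dd_q {F : ℝ × ℝ × ℝ → ℝ} (h : Sm F) (t q v : ℝ) :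
    HasDerivAt (fun s => F (t, s, v)) (Dd (0, 1, 0) F (t, q, v)) q := by
  simpa using Dd_curve h (hasDerivAt_const q t) (hasDerivAt_id q) (hasDerivAt_const q v)

theorem Dd_v {F : ℝ × ℝ × ℝ → ℝ} (h : Sm F) (t q v : ℝ) :
    HasDerivAt (fun s => F (t, q, s)) (Dd (0, 0, 1) F (t, q, v)) v := by
  simpa using Dd_curve h (hasDerivAt_const v t) (hasDerivAt_const v q) (hasDerivAt_id v)

theorem EL_eq {F : ℝ × ℝ × ℝ → ℝ} (h : Sm F) (q : ℝ → ℝ) (hq : ContDiff ℝ 2 q) (t : ℝ) :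
    EL (fun t q v => F (t, q, v)) q t =
      Dd (1, 0, 0) (Dd (0, 0, 1) F) (t, q t, deriv q t)
      + deriv q t * Dd (0, 1, 0) (Dd (0, 0, 1) F) (t, q t, deriv q t)
      + deriv (deriv q) t * Dd (0, 0, 1) (Dd (0, 0, 1) F) (t, q t, deriv q t)
      - Dd (0, 1, 0) F (t, q t, deriv q t) := by
  have hq1 : HasDerivAt q (deriv q t) t := (hq.differentiable (by simp) t).hasDerivAt
  have hq2' : ContDiff ℝ 1 (deriv q) :=
    ((contDiff_succ_iff_deriv (n := 1)).1 (by simpa [one_add_one_eq_two] using hq)).2.2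
  have hq2 : HasDerivAt (deriv q) (deriv (deriv q) t) t :=
    (hq2'.differentiable (by simp) t).hasDerivAt
  have e1 : (fun s => pv (fun t q v => F (t, q, v)) s (q s) (deriv q s))
      = fun s => Dd (0, 0, 1) F (s, q s, deriv q s) := by
    funext s
    exact (Dd_v h _ _ _).deriv
  have e2 : pq (fun t q v => F (t, q, v)) t (q t) (deriv q t)
      = Dd (0, 1, 0) F (t, q t, deriv q t) := (Dd_q h _ _ _).deriv
  unfold EL
  have h3 := (Dd_curve (h.Dd (0, 0, 1)) (hasDerivAt_id' t) hq1 hq2).deriv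
  rw [e1, e2, h3]
  ring

theorem Sm.prim {F : ℝ × ℝ × ℝ → ℝ} (h : Sm F) :
    Sm (fun p => ∫ s in (0:ℝ)..p.2.2, F (p.1, p.2.1, s)) := by
  have e : (fun p : ℝ × ℝ × ℝ => ∫ s in (0:ℝ)..p.2.2, F (p.1, p.2.1, s))
      = fun p => p.2.2 * ∫ s in (0:ℝ)..1, F (p.1, p.2.1, p.2.2 * s) := by
    funext p
    have := intervalIntegral.mul_integral_comp_mul_left (a := 0) (b := 1)
      (f := fun s => F (p.1, p.2.1, s)) p.2.2
    simpa using this.symm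
  rw [e]
  have h2 : ContDiff ℝ (⊤ : ℕ∞) (fun p : ℝ × ℝ × ℝ => ∫ s in (0:ℝ)..1, F (p.1, p.2.1, p.2.2 * s)) := by
    rw [contDiff_infty]
    intro n
    refine par_contDiff n (fun x : (ℝ × ℝ × ℝ) × ℝ => F (x.1.1, x.1.2.1, x.1.2.2 * x.2)) ?_
    have h3 : ContDiff ℝ n F := (contDiff_infty.1 h) n
    exact h3.comp (by fun_prop)
  exact ContDiff.mul (by fun_prop) h2

theorem prim_v {F : ℝ × ℝ × ℝ → ℝ} (h : Sm F) :
    Dd (0, 0, 1) (fun p => ∫ s in (0:ℝ)..p.2.2, F (p.1, p.2.1, s)) = F := by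
  funext ⟨t, q, v⟩
  have h1 := Dd_v h.prim t q v
  have hc : Continuous fun s : ℝ => F (t, q, s) := by
    have := ContDiff.continuous h
    fun_prop
  have h2 := hc.integral_hasStrictDerivAt 0 v
  exact h1.unique h2.hasDerivAt

/-- Helmholtz conditions for a single second-order ODE `A·q'' + B = 0`:
there is a Lagrangian `L` with `EL(L)[q] = A·q'' + B` along every `C²` curve
iff `∂B/∂v = ∂A/∂t + v·∂A/∂q` everywhere. -/
theorem helmholtz_scalar_second_order_ode
    (A B : ℝ → ℝ → ℝ → ℝ)
    (hA : ContDiff ℝ (⊤ : ℕ∞) (fun p : ℝ × ℝ × ℝ => A p.1 p.2.1 p.2.2))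
    (hB : ContDiff ℝ (⊤ : ℕ∞) (fun p : ℝ × ℝ × ℝ => B p.1 p.2.1 p.2.2)) :
    (∃ L : ℝ → ℝ → ℝ → ℝ,
      ContDiff ℝ (⊤ : ℕ∞) (fun p : ℝ × ℝ × ℝ => L p.1 p.2.1 p.2.2) ∧
      ∀ q : ℝ → ℝ, ContDiff ℝ 2 q → ∀ t : ℝ,
        EL L q t = A t (q t) (deriv q t) * deriv (deriv q) t + B t (q t) (deriv q t))
    ↔ (∀ t q v : ℝ, pv B t q v = pt A t q v + v * pq A t q v) := by
  set a : ℝ × ℝ × ℝ → ℝ := fun p => A p.1 p.2.1 p.2.2 with ha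
  set b : ℝ × ℝ × ℝ → ℝ := fun p => B p.1 p.2.1 p.2.2 with hb
  have hA' : Sm a := hA
  have hB' : Sm b := hB
  have eB : ∀ t q v, pv B t q v = Dd (0, 0, 1) b (t, q, v) := fun t q v => (Dd_v hB' t q v).deriv
  have eAt : ∀ t q v, pt A t q v = Dd (1, 0, 0) a (t, q, v) := fun t q v => (Dd_t hA' t q v).deriv
  have eAq : ∀ t q v, pq A t q v = Dd (0, 1, 0) a (t, q, v) := fun t q v => (Dd_q hA' t q v).deriv
  simp only [eB, eAt, eAq]
  constructor
  · rintro ⟨L, hL, hEL⟩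
    set l : ℝ × ℝ × ℝ → ℝ := fun p => L p.1 p.2.1 p.2.2 with hl
    have hL' : Sm l := hL
    have key : ∀ t q v c : ℝ,
        Dd (1, 0, 0) (Dd (0, 0, 1) l) (t, q, v) + v * Dd (0, 1, 0) (Dd (0, 0, 1) l) (t, q, v)
          + c * Dd (0, 0, 1) (Dd (0, 0, 1) l) (t, q, v) - Dd (0, 1, 0) l (t, q, v)
          = a (t, q, v) * c + b (t, q, v) := by
      intro t q v c
      let γ : ℝ → ℝ := fun s => q + v * (s - t) + c / 2 * (s - t) ^ 2
      have hγ : ContDiff ℝ 2 γ := by fun_prop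
      have d1 : deriv γ = fun s => v + c * (s - t) := by
        funext s
        have h1 : HasDerivAt (fun s : ℝ => s - t) 1 s := (hasDerivAt_id s).sub_const t
        have h2 := ((h1.const_mul v).const_add q).add ((h1.pow 2).const_mul (c / 2))
        have h3 := h2.deriv
        refine Eq.trans h3 ?_
        simp
        ring
      have d2 : deriv (deriv γ) t = c := by
        rw [d1]
        have h1 : HasDerivAt (fun s : ℝ => s - t) 1 t := (hasDerivAt_id t).sub_const t
        have h2 := ((h1.const_mul c).const_add v).deriv
        refine Eq.trans h2 ?_
        simp
      have g0 : γ t = q := by simp [γ]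
      have g1 : deriv γ t = v := by simp [d1]
      have h1 := hEL γ hγ t
      have h2 := EL_eq hL' γ hγ t
      rw [d2, g1, g0] at h1 h2
      exact h2.symm.trans h1
    have kA : Dd (0, 0, 1) (Dd (0, 0, 1) l) = a := by
      funext ⟨t, q, v⟩
      linarith [key t q v 0, key t q v 1]
    intro t q v
    have hP := hL'.Dd (0, 0, 1)
    have h1 := ((Dd_v (hP.Dd (1, 0, 0)) t q v).add
      ((hasDerivAt_id v).mul (Dd_v (hP.Dd (0, 1, 0)) t q v))).sub (Dd_v (hL'.Dd (0, 1, 0)) t q v)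
    have h2 := Dd_v hB' t q v
    have e : (fun s => b (t, q, s)) = fun s => Dd (1, 0, 0) (Dd (0, 0, 1) l) (t, q, s)
        + s * Dd (0, 1, 0) (Dd (0, 0, 1) l) (t, q, s) - Dd (0, 1, 0) l (t, q, s) := by
      funext s
      linarith [key t q s 0]
    rw [e] at h2
    have h3 := h2.unique h1
    rw [h3, Dd_symm hP, Dd_symm hP (0, 0, 1) (0, 1, 0), kA, Dd_symm hL' (0, 0, 1) (0, 1, 0)]
    simp only [id]
    ring
  · intro H
    let P : ℝ × ℝ × ℝ → ℝ := fun p => ∫ s in (0:ℝ)..p.2.2, a (p.1, p.2.1, s)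
    have hP : Sm P := hA'.prim
    have vP : Dd (0, 0, 1) P = a := prim_v hA'
    let K : ℝ × ℝ × ℝ → ℝ := fun p => ∫ s in (0:ℝ)..p.2.2, P (p.1, p.2.1, s)
    have hK : Sm K := hP.prim
    have vK : Dd (0, 0, 1) K = P := prim_v hP
    let b0 : ℝ × ℝ × ℝ → ℝ := fun p => b (p.1, p.2.2, 0)
    have hb0 : Sm b0 := ContDiff.comp hB' (by fun_prop)
    let N : ℝ × ℝ × ℝ → ℝ := fun p => ∫ s in (0:ℝ)..p.2.2, b0 (p.1, p.2.1, s)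
    have hN : Sm N := hb0.prim
    have vN : Dd (0, 0, 1) N = b0 := prim_v hb0
    let l : ℝ × ℝ × ℝ → ℝ := fun p => K p - N (p.1, 0, p.2.1)
    have hl : Sm l := ContDiff.sub hK (ContDiff.comp hN (by fun_prop))
    have lv : Dd (0, 0, 1) l = P := by
      funext ⟨t, q, v⟩
      have h1 := (Dd_v hK t q v).sub_const (N (t, 0, q))
      rw [vK] at h1
      exact (Dd_v hl t q v).unique h1
    have lq : ∀ t q v, Dd (0, 1, 0) l (t, q, v) = Dd (0, 1, 0) K (t, q, v) - b (t, q, 0) := by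
      intro t q v
      have h2 := Dd_v hN t 0 q
      rw [vN] at h2
      exact (Dd_q hl t q v).unique ((Dd_q hK t q v).sub h2)
    have P0 : ∀ t q, P (t, q, 0) = 0 := fun t q => by simp [P]
    have K0 : ∀ t q, K (t, q, 0) = 0 := fun t q => by simp [K]
    have tP0 : ∀ t q, Dd (1, 0, 0) P (t, q, 0) = 0 := by
      intro t q
      have h1 := Dd_t hP t q 0
      simp only [P0] at h1
      exact h1.unique (hasDerivAt_const t 0)
    have qK0 : ∀ t q, Dd (0, 1, 0) K (t, q, 0) = 0 := by
      intro t q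
      have h1 := Dd_q hK t q 0
      simp only [K0] at h1
      exact h1.unique (hasDerivAt_const q 0)
    have main : ∀ t q v, Dd (1, 0, 0) P (t, q, v) + v * Dd (0, 1, 0) P (t, q, v)
        - Dd (0, 1, 0) K (t, q, v) - b (t, q, v) = - b (t, q, 0) := by
      intro t q v
      have hd : ∀ s, HasDerivAt (fun v => Dd (1, 0, 0) P (t, q, v) + v * Dd (0, 1, 0) P (t, q, v)
        - Dd (0, 1, 0) K (t, q, v) - b (t, q, v)) 0 s := by
        intro s
        have h1 := (((Dd_v (hP.Dd (1, 0, 0)) t q s).add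
          ((hasDerivAt_id s).mul (Dd_v (hP.Dd (0, 1, 0)) t q s))).sub
          (Dd_v (hK.Dd (0, 1, 0)) t q s)).sub (Dd_v hB' t q s)
        rw [Dd_symm hP, Dd_symm hP (0, 0, 1) (0, 1, 0), Dd_symm hK (0, 0, 1) (0, 1, 0), vP, vK,
          H] at h1
        refine HasDerivAt.congr_deriv h1 ?_
        simp only [id]
        ring
      have := is_const_of_deriv_eq_zero (fun s => (hd s).differentiableAt)
        (fun s => (hd s).deriv) v 0
      simp only [tP0, qK0] at this
      rw [this]
      ring
    refine ⟨fun t q v => l (t, q, v), hl, fun q hq t => ?_⟩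
    rw [EL_eq hl q hq t, lv, vP, lq]
    have := main t (q t) (deriv q t)
    have e1 : a (t, q t, deriv q t) = A t (q t) (deriv q t) := rfl
    have e2 : b (t, q t, deriv q t) = B t (q t) (deriv q t) := rfl
    rw [← e1, ← e2]
    linarith
end

section
/- Let q1, q2, λ : ℝ → ℝ be smooth functions. Then the following are equivalent: (a) for all compactly supported smooth functions h1, h2, h3 : ℝ → ℝ, the first variation of the action of the Lagrangian L = ½q̇1² + ½q̇2² + λ(q1 − q2) vanishes, i.e. ∫_ℝ [q1'(t)·h1'(t) + q2'(t)·h2'(t) + h3(t)·(q1(t) − q2(t)) + λ(t)·(h1(t) − h2(t))] dt = 0; (b) for all t ∈ ℝ, q1''(t) = 0, q2(t) = q1(t), and λ(t) = 0. -/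
open MeasureTheory

theorem aux_fund (f : ℝ → ℝ) (hf : Continuous f)
    (h : ∀ g : ℝ → ℝ, ContDiff ℝ (⊤ : ℕ∞) g → HasCompactSupport g → ∫ t, g t * f t = 0) :
    ∀ t, f t = 0 := by
  have h1 := ae_eq_zero_of_integral_contDiff_smul_eq_zero (μ := volume) hf.locallyIntegrable
    (fun g hg hg' => by simpa using h g hg hg')
  have h2 : f = fun _ => (0 : ℝ) :=
    Continuous.ae_eq_iff_eq volume hf continuous_const |>.1 h1
  intro t
  rw [h2]

theorem aux_int (f h : ℝ → ℝ) (hf : Continuous f) (hh : Continuous h)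
    (hc : HasCompactSupport h) : Integrable (fun t => f t * h t) :=
  (hf.mul hh).integrable_of_hasCompactSupport hc.mul_left

theorem aux_d (f : ℝ → ℝ) (hf : ContDiff ℝ (⊤ : ℕ∞) f) : ContDiff ℝ (⊤ : ℕ∞) (deriv f) :=
  (contDiff_infty_iff_deriv.1 hf).2

theorem aux_ibp (f h : ℝ → ℝ) (hf : ContDiff ℝ (⊤ : ℕ∞) f) (hh : ContDiff ℝ (⊤ : ℕ∞) h)
    (hc : HasCompactSupport h) :
    ∫ t, deriv f t * deriv h t = - ∫ t, deriv (deriv f) t * h t := by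
  have hf1 := aux_d f hf
  have hf2 := aux_d _ hf1
  have hh1 := aux_d h hh
  exact integral_mul_deriv_eq_deriv_mul_of_integrable
    (fun x _ => ((contDiff_infty_iff_deriv.1 hf1).1 x).hasDerivAt)
    (fun x _ => ((contDiff_infty_iff_deriv.1 hh).1 x).hasDerivAt)
    (aux_int _ _ hf1.continuous hh1.continuous hc.deriv)
    (aux_int _ _ hf2.continuous hh.continuous hc)
    (aux_int _ _ hf1.continuous hh.continuous hc)

theorem aux_key (f l : ℝ → ℝ) (hf : ContDiff ℝ (⊤ : ℕ∞) f) (hl : Continuous l)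
    (H : ∀ h : ℝ → ℝ, ContDiff ℝ (⊤ : ℕ∞) h → HasCompactSupport h →
      ∫ t, (deriv f t * deriv h t + l t * h t) = 0) :
    ∀ t, l t - deriv (deriv f) t = 0 := by
  have hf1 := aux_d f hf
  have hf2 := aux_d _ hf1
  refine aux_fund _ (hl.sub hf2.continuous) fun g hg hc => ?_
  have h0 := H g hg hc
  rw [integral_add (aux_int _ _ hf1.continuous (aux_d g hg).continuous hc.deriv)
    (aux_int _ _ hl hg.continuous hc), aux_ibp f g hf hg hc] at h0
  have : ∀ t, g t * (l t - deriv (deriv f) t) = l t * g t - deriv (deriv f) t * g t :=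
    fun t => by ring
  simp_rw [this]
  rw [integral_sub (aux_int _ _ hl hg.continuous hc)
    (aux_int _ _ hf2.continuous hg.continuous hc)]
  linarith

/-- For smooth `q1, q2, λ : ℝ → ℝ`, the first variation of the action of the
Lagrangian `L = ½q̇1² + ½q̇2² + λ(q1 − q2)` vanishes for all compactly supported
smooth variations `h1, h2, h3` iff `q1'' = 0`, `q2 = q1` and `λ = 0` everywhere. -/
theorem constrained_example_first_variation
    (q1 q2 lam : ℝ → ℝ)
    (hq1 : ContDiff ℝ (⊤ : ℕ∞) q1) (hq2 : ContDiff ℝ (⊤ : ℕ∞) q2) (hlam : ContDiff ℝ (⊤ : ℕ∞) lam) :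
    (∀ h1 h2 h3 : ℝ → ℝ,
      ContDiff ℝ (⊤ : ℕ∞) h1 → HasCompactSupport h1 →
      ContDiff ℝ (⊤ : ℕ∞) h2 → HasCompactSupport h2 →
      ContDiff ℝ (⊤ : ℕ∞) h3 → HasCompactSupport h3 →
      (∫ t : ℝ, (deriv q1 t * deriv h1 t + deriv q2 t * deriv h2 t +
        h3 t * (q1 t - q2 t) + lam t * (h1 t - h2 t))) = 0)
    ↔ (∀ t : ℝ, deriv (deriv q1) t = 0 ∧ q2 t = q1 t ∧ lam t = 0) := by
  constructor
  · intro H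
    have z : ContDiff ℝ (⊤ : ℕ∞) (fun _ : ℝ => (0 : ℝ)) := contDiff_const
    have zc : HasCompactSupport (fun _ : ℝ => (0 : ℝ)) := HasCompactSupport.zero
    have e3 := aux_fund (fun t => q1 t - q2 t) (hq1.continuous.sub hq2.continuous)
      (fun g hg hc => by simpa using H _ _ g z zc z zc hg hc)
    have e1 := aux_key q1 lam hq1 hlam.continuous
      (fun g hg hc => by simpa using H g _ _ hg hc z zc z zc)
    have e2 := aux_key q2 (fun t => - lam t) hq2 hlam.continuous.neg
      (fun g hg hc => by simpa using H _ g _ z zc hg hc z zc)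
    have hq : q2 = q1 := funext fun t => by have := e3 t; linarith
    subst hq
    intro t
    have a := e1 t
    have b := e2 t
    exact ⟨by linarith, rfl, by linarith⟩
  · intro H h1 h2 h3 c1 s1 c2 s2 c3 s3
    have hq : q2 = q1 := funext fun t => (H t).2.1
    subst hq
    have hl : ∀ t, lam t = 0 := fun t => (H t).2.2
    have hd : ∀ t, deriv (deriv q2) t = 0 := fun t => (H t).1
    have hc := (aux_d q2 hq1).continuous
    simp only [hl, sub_self, mul_zero, zero_mul, add_zero]
    rw [integral_add (aux_int _ _ hc (aux_d h1 c1).continuous s1.deriv)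
      (aux_int _ _ hc (aux_d h2 c2).continuous s2.deriv), aux_ibp q2 h1 hq1 c1 s1,
      aux_ibp q2 h2 hq1 c2 s2]
    simp [hd]
end
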